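/- Let q be a prime power and let ν, m₁, m₂, t be positive integers with ν ≥ m₁ ≥ t+1 and ν ≥ m₂ ≥ t+1, and let S ∈ 𝒫_{t+1}. Then |𝒞₃(S;m₁)| = N'(t+1;m₁;2ν) and |𝒞₄(S;m₂,t)| = [t+1 choose 1]_q · N'(t;m₂;2ν) − q·[t choose 1]_q · N'(t+1;m₂;2ν); consequently |𝒞₃(S;m₁)|·|𝒞₄(S;m₂,t)| = N'(t+1;m₁;2ν)·([t+1 choose 1]_q · N'(t;m₂;2ν) − q·[t choose 1]_q · N'(t+1;m₂;2ν)). -/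

import Mathlib

open Finset Module

noncomputable section

/-- Gaussian binomial coefficient `[n choose k]_q` as a rational number. -/
def gaussBinom (q n k : ℕ) : ℚ :=
  ∏ i ∈ Finset.range k, ((q : ℚ) ^ ((n : ℤ) - i) - 1) / ((q : ℚ) ^ ((k : ℤ) - i) - 1)

/-- `N'(a; m; 2ν)`, the number of `m`-dim totally isotropic subspaces containing
a fixed `a`-dim one. -/
def Nprime (q a m ν : ℕ) : ℚ :=
  ∏ i ∈ Finset.Icc 1 (m - a), ((q : ℚ) ^ (2 * ((ν : ℤ) - m + i)) - 1) / ((q : ℚ) ^ (i : ℤ) - 1)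

variable {K V : Type*} [Field K] [AddCommGroup V] [Module K V]

/-- A subspace is totally isotropic w.r.t. the bilinear form `f`. -/
def TotallyIsotropic (f : V →ₗ[K] V →ₗ[K] K) (W : Submodule K V) : Prop :=
  ∀ x ∈ W, ∀ y ∈ W, f x y = 0

/-- `polar f m` = `𝒫_m`, the set of `m`-dimensional totally isotropic subspaces. -/
def polar (f : V →ₗ[K] V →ₗ[K] K) (m : ℕ) : Set (Submodule K V) :=
  {W | TotallyIsotropic f W ∧ finrank K W = m}

/-- `X` is a `t`-cover of the family `ℱ`. -/
def IsTCover (f : V →ₗ[K] V →ₗ[K] K) (t : ℕ) (ℱ : Set (Submodule K V))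
    (X : Submodule K V) : Prop :=
  TotallyIsotropic f X ∧ ∀ F ∈ ℱ, t ≤ finrank K ↥(X ⊓ F)

/-- `τ_t(ℱ)`, the minimum dimension of a `t`-cover of `ℱ`. -/
def tauCover (f : V →ₗ[K] V →ₗ[K] K) (t : ℕ) (ℱ : Set (Submodule K V)) : ℕ :=
  sInf {x | ∃ X, IsTCover f t ℱ X ∧ finrank K ↥X = x}

def C1 (f : V →ₗ[K] V →ₗ[K] K) (M T : Submodule K V) (m t : ℕ) : Set (Submodule K V) :=
  {F | F ∈ polar f m ∧ T ≤ F ∧ t + 1 ≤ finrank K ↥(F ⊓ M)}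

def C2 (f : V →ₗ[K] V →ₗ[K] K) (M T : Submodule K V) (m : ℕ) : Set (Submodule K V) :=
  {F | F ∈ polar f m ∧ T ≤ F} ∪ {F | F ∈ polar f m ∧ F ≤ M}

def C3 (f : V →ₗ[K] V →ₗ[K] K) (S : Submodule K V) (m : ℕ) : Set (Submodule K V) :=
  {F | F ∈ polar f m ∧ S ≤ F}

def C4 (f : V →ₗ[K] V →ₗ[K] K) (S : Submodule K V) (m t : ℕ) : Set (Submodule K V) :=
  {F | F ∈ polar f m ∧ t ≤ finrank K ↥(F ⊓ S)}

def s0 (q ν m s t : ℕ) : ℚ :=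
  gaussBinom q (s - t) 1 * Nprime q (t + 1) m ν - q * gaussBinom q (s - t) 2 * Nprime q (t + 2) m ν

/-!
If `A` is totally isotropic of dimension `a`, then `A ⊔ K ∙ v` is totally isotropic of dimension
`a + 1` exactly for `v ∈ Aᗮ \ A`. Counting the pairs `(v, F)` with `F ∈ 𝒫_m`, `A ≤ F` and
`v ∈ F \ A` in two ways therefore gives the recursion
`(q ^ (2ν - a) - q ^ a) N'(a + 1; m; 2ν) = N'(a; m; 2ν) (q ^ m - q ^ a)`, which yields `|𝒞₃|`.

For `|𝒞₄|`, a subspace `F` that meets `S` in dimension at least `t` without containing `S` meets it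
in a unique hyperplane `T` of `S`. Hence `𝒞₄(S) \ 𝒞₃(S)` is the disjoint union of the sets
`𝒞₃(T) \ 𝒞₃(S)` over the `[t + 1 choose 1]_q` hyperplanes `T` of `S`.
-/

section DoubleCounting

variable {α β R : Type*} [Semiring R]

theorem ncard_mul_eq_ncard_mul (r : α → β → Prop) {s : Set α} {t : Set β} (hs : s.Finite)
    (ht : t.Finite) {m n : R} (hm : ∀ a ∈ s, ({b ∈ t | r a b}.ncard : R) = m)
    (hn : ∀ b ∈ t, ({a ∈ s | r a b}.ncard : R) = n) :
    (s.ncard : R) * m = t.ncard * n := by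
  classical
  lift s to Finset α using hs
  lift t to Finset β using ht
  simp only [mem_coe, ← coe_bipartiteAbove, ← coe_bipartiteBelow, Set.ncard_coe_finset] at *
  calc
    (#s : R) * m = ∑ a ∈ s, (#(t.bipartiteAbove r a) : R) := by
      rw [sum_congr rfl hm, sum_const, nsmul_eq_mul]
    _ = ∑ b ∈ t, (#(s.bipartiteBelow r b) : R) := by
      exact_mod_cast congrArg (Nat.cast : ℕ → R)
        (sum_card_bipartiteAbove_eq_sum_card_bipartiteBelow r)
    _ = #t * n := by rw [sum_congr rfl hn, sum_const, nsmul_eq_mul]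

end DoubleCounting

section Coefficients

theorem gaussBinom_one {q : ℕ} (hq : q ≠ 1) (n : ℕ) :
    gaussBinom q n 1 = ∑ i ∈ range n, (q : ℚ) ^ i := by
  rw [geom_sum_eq (by exact_mod_cast hq)]
  simp [gaussBinom]

theorem gaussBinom_succ_one {q : ℕ} (hq : q ≠ 1) (n : ℕ) :
    gaussBinom q (n + 1) 1 = q * gaussBinom q n 1 + 1 := by
  rw [gaussBinom_one hq, gaussBinom_one hq, geom_sum_succ]

theorem Nprime_self (q m ν : ℕ) : Nprime q m m ν = 1 := by
  simp [Nprime]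

theorem Nprime_eq_Nprime_succ_mul (q ν : ℕ) {a m : ℕ} (ha : a < m) :
    Nprime q a m ν = Nprime q (a + 1) m ν *
      (((q : ℚ) ^ (2 * ((ν : ℤ) - a)) - 1) / ((q : ℚ) ^ (m - a) - 1)) := by
  obtain ⟨d, rfl⟩ := Nat.exists_eq_add_of_lt ha
  have hd : a + d + 1 - a = d + 1 := by lia
  have hd' : a + d + 1 - (a + 1) = d := by lia
  have hν : (ν : ℤ) - (a + d + 1 : ℕ) + (d + 1 : ℕ) = ν - a := by lia
  rw [Nprime, Nprime, hd, hd', prod_Icc_succ_top (by lia), hν, zpow_natCast]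

end Coefficients

section Hyperplanes

/-- The hyperplanes of a subspace `S`, as subspaces of the ambient space. The dimension condition is
additive, so `⊥` has no hyperplanes. -/
def hyperplanes (S : Submodule K V) : Set (Submodule K V) :=
  {T | T ≤ S ∧ finrank K T + 1 = finrank K S}

theorem hyperplanes_eq_image_map_subtype (S : Submodule K V) :
    hyperplanes S = Submodule.map S.subtype '' hyperplanes ⊤ := by
  ext T
  constructor
  · rintro ⟨hTS, hT⟩
    have hmap : (T.comap S.subtype).map S.subtype = T := by
      rw [Submodule.map_comap_subtype, inf_eq_right.2 hTS]
    refine ⟨T.comap S.subtype, ⟨le_top, ?_⟩, hmap⟩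
    rw [finrank_top, ← hT, ← Submodule.finrank_map_subtype_eq, hmap]
  · rintro ⟨H, ⟨-, hH⟩, rfl⟩
    refine ⟨Submodule.map_subtype_le S H, ?_⟩
    rw [Submodule.finrank_map_subtype_eq, hH, finrank_top]

variable [FiniteDimensional K V]

-- Annihilators identify the hyperplanes of `V` with the points of the projective space of `V*`.
theorem ncard_hyperplanes_top [Finite K] :
    (hyperplanes (⊤ : Submodule K V)).ncard = ∑ i ∈ range (finrank K V), Nat.card K ^ i := by
  have finrank_annihilator (H : Submodule K V) :
      H ∈ hyperplanes ⊤ ↔ finrank K H.dualAnnihilator = 1 := by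
    have := Subspace.finrank_add_finrank_dualAnnihilator_eq H
    simp only [hyperplanes, Set.mem_ofPred_eq, le_top, true_and, finrank_top]
    lia
  calc
    (hyperplanes (⊤ : Submodule K V)).ncard
      = Nat.card {L : Submodule K (Dual K V) // finrank K L = 1} :=
        Nat.card_congr <| Subspace.orderIsoFiniteDimensional.toEquiv.subtypeEquiv
          finrank_annihilator
    _ = Nat.card (Projectivization K (Dual K V)) :=
        Nat.card_congr (Projectivization.equivSubmodule K (Dual K V)).symm
    _ = ∑ i ∈ range (finrank K V), Nat.card K ^ i :=
        Projectivization.card_of_finrank K _ Subspace.dual_finrank_eq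

theorem ncard_hyperplanes [Finite K] (S : Submodule K V) :
    (hyperplanes S).ncard = ∑ i ∈ range (finrank K S), Nat.card K ^ i := by
  rw [hyperplanes_eq_image_map_subtype,
    Set.ncard_image_of_injective _ (Submodule.map_injective_of_injective S.injective_subtype),
    ncard_hyperplanes_top]

theorem inf_mem_hyperplanes_iff {F S : Submodule K V} :
    F ⊓ S ∈ hyperplanes S ↔ finrank K S ≤ finrank K ↥(F ⊓ S) + 1 ∧ ¬ S ≤ F := by
  simp only [hyperplanes, Set.mem_ofPred_eq, inf_le_right, true_and]
  constructor
  · intro h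
    refine ⟨h.ge, fun hSF ↦ ?_⟩
    rw [inf_eq_right.2 hSF] at h
    lia
  · rintro ⟨hle, hSF⟩
    have := Submodule.finrank_lt_finrank_of_lt (inf_lt_right.2 hSF)
    lia

theorem inf_eq_iff_of_mem_hyperplanes {F S T : Submodule K V} (hT : T ∈ hyperplanes S) :
    F ⊓ S = T ↔ T ≤ F ∧ ¬ S ≤ F := by
  constructor
  · rintro rfl
    exact ⟨inf_le_left, (inf_mem_hyperplanes_iff.1 hT).2⟩
  · rintro ⟨hTF, hSF⟩
    have := Submodule.finrank_lt_finrank_of_lt (inf_lt_right.2 hSF)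
    exact (Submodule.eq_of_le_of_finrank_le (le_inf hTF hT.1) (by have := hT.2; lia)).symm

end Hyperplanes

section Isotropic

variable {f : V →ₗ[K] V →ₗ[K] K} {A F : Submodule K V}

theorem TotallyIsotropic.mono (hF : TotallyIsotropic f F) (hAF : A ≤ F) : TotallyIsotropic f A :=
  fun x hx y hy ↦ hF x (hAF hx) y (hAF hy)

theorem TotallyIsotropic.le_orthogonalBilin (hF : TotallyIsotropic f F) (hAF : A ≤ F) :
    F ≤ A.orthogonalBilin f :=
  fun y hy x hx ↦ hF x (hAF hx) y hy

theorem TotallyIsotropic.sup_span_singleton (hf : f.IsAlt) (hA : TotallyIsotropic f A) {v : V}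
    (hv : v ∈ A.orthogonalBilin f) : TotallyIsotropic f (A ⊔ K ∙ v) := by
  have hv' (x : V) (hx : x ∈ A) : f v x = 0 := hf.isRefl _ _ (hv x hx)
  intro x hx y hy
  obtain ⟨a, ha, b, hb, rfl⟩ := Submodule.mem_sup.1 hx
  obtain ⟨c, hc, d, hd, rfl⟩ := Submodule.mem_sup.1 hy
  obtain ⟨r, rfl⟩ := Submodule.mem_span_singleton.1 hb
  obtain ⟨s, rfl⟩ := Submodule.mem_span_singleton.1 hd
  simp [hA a ha c hc, hv a ha, hv' c hc, hf.self_eq_zero v]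

theorem sup_span_singleton_mem_polar [FiniteDimensional K V] (hf : f.IsAlt) {a : ℕ}
    (hA : A ∈ polar f a) {v : V} (hv : v ∈ A.orthogonalBilin f) (hvA : v ∉ A) :
    A ⊔ K ∙ v ∈ polar f (a + 1) :=
  ⟨hA.1.sup_span_singleton hf hv, by rw [Submodule.finrank_sup_span_singleton hvA, hA.2]⟩

theorem C3_self [FiniteDimensional K V] {a : ℕ} (hA : A ∈ polar f a) : C3 f A a = {A} := by
  refine Set.eq_singleton_iff_unique_mem.2 ⟨⟨hA, le_rfl⟩, fun F hF ↦ ?_⟩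
  exact (Submodule.eq_of_le_of_finrank_eq hF.2 (hA.2.trans hF.1.2.symm)).symm

theorem C3_sup_span_singleton (v : V) (m : ℕ) :
    C3 f (A ⊔ K ∙ v) m = {F ∈ C3 f A m | v ∈ F} := by
  ext F
  simp [C3, Submodule.span_singleton_le_iff_mem, and_assoc]

theorem sep_mem_orthogonalBilin_diff_of_mem_C3 {m : ℕ} (hF : F ∈ C3 f A m) :
    {v ∈ (A.orthogonalBilin f : Set V) \ A | v ∈ F} = (F : Set V) \ A := by
  ext v
  have : v ∈ F → v ∈ A.orthogonalBilin f := fun hv ↦ hF.1.1.le_orthogonalBilin hF.2 hv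
  simp only [Set.mem_ofPred_eq, Set.mem_sdiff, SetLike.mem_coe]
  tauto

theorem C3_anti {S T : Submodule K V} (hTS : T ≤ S) (m : ℕ) : C3 f S m ⊆ C3 f T m :=
  fun _ hF ↦ ⟨hF.1, hTS.trans hF.2⟩

theorem C3_subset_C4 {S : Submodule K V} {m t : ℕ} (ht : t ≤ finrank K S) :
    C3 f S m ⊆ C4 f S m t :=
  fun _ hF ↦ ⟨hF.1, by rwa [inf_eq_right.2 hF.2]⟩

end Isotropic

section Counting

variable [Finite K] [FiniteDimensional K V] {f : V →ₗ[K] V →ₗ[K] K}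

theorem ncard_diff_of_le {A W : Submodule K V} (hAW : A ≤ W) :
    (((W : Set V) \ A).ncard : ℚ) =
      (Nat.card K : ℚ) ^ finrank K W - (Nat.card K : ℚ) ^ finrank K A := by
  have : Finite V := Module.finite_of_finite K
  have ncard_eq (U : Submodule K V) : (U : Set V).ncard = Nat.card K ^ finrank K U :=
    Module.natCard_eq_pow_finrank
  rw [Set.cast_ncard_sdiff hAW (Set.toFinite _), ncard_eq, ncard_eq, Nat.cast_pow,
    Nat.cast_pow]

theorem mul_eq_ncard_C3_mul (hf : f.IsAlt) (hf' : f.SeparatingLeft) {a m : ℕ}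
    {A : Submodule K V} (hA : A ∈ polar f a) {N : ℚ}
    (hN : ∀ B ∈ polar f (a + 1), ((C3 f B m).ncard : ℚ) = N) :
    ((Nat.card K : ℚ) ^ (finrank K V - a) - (Nat.card K : ℚ) ^ a) * N =
      (C3 f A m).ncard * ((Nat.card K : ℚ) ^ m - (Nat.card K : ℚ) ^ a) := by
  have : Finite V := Module.finite_of_finite K
  have finrank_orthogonal : finrank K (A.orthogonalBilin f) = finrank K V - a := by
    rw [← hA.2]
    exact LinearMap.BilinForm.finrank_orthogonal
      (hf.isRefl.nondegenerate_iff_separatingLeft.2 hf') A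
  have ncard_extensions (v : V) (hv : v ∈ (A.orthogonalBilin f : Set V) \ A) :
      ({F ∈ C3 f A m | v ∈ F}.ncard : ℚ) = N := by
    rw [← C3_sup_span_singleton, hN _ (sup_span_singleton_mem_polar hf hA hv.1 hv.2)]
  have ncard_vectors (F : Submodule K V) (hF : F ∈ C3 f A m) :
      ({v ∈ (A.orthogonalBilin f : Set V) \ A | v ∈ F}.ncard : ℚ) =
        (Nat.card K : ℚ) ^ m - (Nat.card K : ℚ) ^ a := by
    rw [sep_mem_orthogonalBilin_diff_of_mem_C3 hF, ncard_diff_of_le hF.2, hF.1.2, hA.2]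
  rw [← ncard_mul_eq_ncard_mul (fun v F ↦ v ∈ F) (Set.toFinite _) (Set.toFinite _)
    ncard_extensions ncard_vectors, ncard_diff_of_le (hA.1.le_orthogonalBilin le_rfl),
    finrank_orthogonal, hA.2]

theorem ncard_C3 (hf : f.IsAlt) (hf' : f.SeparatingLeft) {ν : ℕ} (hV : finrank K V = 2 * ν)
    {a m : ℕ} (ham : a ≤ m) {A : Submodule K V} (hA : A ∈ polar f a) :
    ((C3 f A m).ncard : ℚ) = Nprime (Nat.card K) a m ν := by
  induction ham using Nat.decreasingInduction generalizing A with
  | self => simp [C3_self hA, Nprime_self]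
  | of_succ a ham ih =>
    have recursion := mul_eq_ncard_C3_mul (m := m) hf hf' hA fun _ hB ↦ ih hB
    have hq : (1 : ℚ) < Nat.card K := by exact_mod_cast Finite.one_lt_card
    have ha : a ≤ 2 * ν := hV ▸ hA.2 ▸ Submodule.finrank_le A
    have orthogonal_pow : (Nat.card K : ℚ) ^ (2 * ν - a) =
        (Nat.card K : ℚ) ^ a * (Nat.card K : ℚ) ^ (2 * ((ν : ℤ) - a)) := by
      rw [← zpow_natCast, ← zpow_natCast, ← zpow_add₀ (by positivity)]
      congr 1
      lia
    have isotropic_pow : (Nat.card K : ℚ) ^ m =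
        (Nat.card K : ℚ) ^ a * (Nat.card K : ℚ) ^ (m - a) := by
      rw [← pow_add, Nat.add_sub_cancel' ham.le]
    have denominator_pos : 0 < (Nat.card K : ℚ) ^ (m - a) - 1 :=
      sub_pos.2 (one_lt_pow₀ hq (by lia))
    rw [hV, orthogonal_pow, isotropic_pow] at recursion
    rw [Nprime_eq_Nprime_succ_mul _ _ ham, mul_div_assoc', eq_div_iff denominator_pos.ne']
    refine mul_left_cancel₀ (pow_ne_zero a (zero_lt_one.trans hq).ne') ?_
    linear_combination -recursion

theorem ncard_C4_diff_C3 {m t : ℕ} {S : Submodule K V} (hS : finrank K S = t + 1) {n : ℚ}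
    (hn : ∀ T ∈ hyperplanes S, ((C3 f T m \ C3 f S m).ncard : ℚ) = n) :
    ((C4 f S m t \ C3 f S m).ncard : ℚ) = (hyperplanes S).ncard * n := by
  have : Finite V := Module.finite_of_finite K
  have mem_diff_iff (F : Submodule K V) :
      F ∈ C4 f S m t \ C3 f S m ↔ F ∈ polar f m ∧ F ⊓ S ∈ hyperplanes S := by
    rw [inf_mem_hyperplanes_iff, hS, add_le_add_iff_right]
    simp only [C3, C4, Set.mem_sdiff, Set.mem_ofPred_eq]
    tauto
  have fiber_eq (T : Submodule K V) (hT : T ∈ hyperplanes S) :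
      {F ∈ C4 f S m t \ C3 f S m | F ⊓ S = T} = C3 f T m \ C3 f S m := by
    ext F
    have inf_mem : F ⊓ S = T → F ⊓ S ∈ hyperplanes S := fun h ↦ h ▸ hT
    have inf_eq_iff := inf_eq_iff_of_mem_hyperplanes (F := F) hT
    rw [Set.mem_ofPred_eq, mem_diff_iff]
    simp only [C3, Set.mem_sdiff, Set.mem_ofPred_eq]
    tauto
  rw [← mul_one (Set.ncard _ : ℚ)]
  refine ncard_mul_eq_ncard_mul (fun F T ↦ F ⊓ S = T) (Set.toFinite _) (Set.toFinite _)
    (fun F hF ↦ ?_) fun T hT ↦ by rw [fiber_eq T hT, hn T hT]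
  have unique_hyperplane : {T ∈ hyperplanes S | F ⊓ S = T} = {F ⊓ S} :=
    Set.eq_singleton_iff_unique_mem.2 ⟨⟨((mem_diff_iff F).1 hF).2, rfl⟩, fun T hT ↦ hT.2.symm⟩
  rw [unique_hyperplane, Set.ncard_singleton, Nat.cast_one]

theorem ncard_C4 (hf : f.IsAlt) (hf' : f.SeparatingLeft) {ν : ℕ} (hV : finrank K V = 2 * ν)
    {m t : ℕ} (hm : t + 1 ≤ m) {S : Submodule K V} (hS : S ∈ polar f (t + 1)) :
    ((C4 f S m t).ncard : ℚ) =
      gaussBinom (Nat.card K) (t + 1) 1 * Nprime (Nat.card K) t m ν -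
        Nat.card K * gaussBinom (Nat.card K) t 1 * Nprime (Nat.card K) (t + 1) m ν := by
  have : Finite V := Module.finite_of_finite K
  have hq : Nat.card K ≠ 1 := Finite.one_lt_card.ne'
  have ncard_C3_S := ncard_C3 hf hf' hV hm hS
  have ncard_fiber (T : Submodule K V) (hT : T ∈ hyperplanes S) :
      ((C3 f T m \ C3 f S m).ncard : ℚ) =
        Nprime (Nat.card K) t m ν - Nprime (Nat.card K) (t + 1) m ν := by
    have hT' : T ∈ polar f t := ⟨hS.1.mono hT.1, by have := hT.2; have := hS.2; lia⟩
    rw [Set.cast_ncard_sdiff (C3_anti hT.1 m) (Set.toFinite _), ncard_C3_S,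
      ncard_C3 hf hf' hV (by lia) hT']
  have ncard_hyperplanes_S :
      ((hyperplanes S).ncard : ℚ) = gaussBinom (Nat.card K) (t + 1) 1 := by
    rw [ncard_hyperplanes, hS.2, gaussBinom_one hq, Nat.cast_sum]
    simp only [Nat.cast_pow]
  have ncard_diff := ncard_C4_diff_C3 hS.2 ncard_fiber
  rw [Set.cast_ncard_sdiff (C3_subset_C4 (hS.2 ▸ t.le_succ)) (Set.toFinite _), ncard_C3_S,
    ncard_hyperplanes_S] at ncard_diff
  linear_combination ncard_diff -
    Nprime (Nat.card K) (t + 1) m ν * gaussBinom_succ_one hq t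

theorem stmt_11_general (hf : f.IsAlt) (hf' : f.SeparatingLeft) {ν : ℕ}
    (hV : finrank K V = 2 * ν) {m₁ m₂ t : ℕ} (hm₁ : t + 1 ≤ m₁) (hm₂ : t + 1 ≤ m₂)
    {S : Submodule K V} (hS : S ∈ polar f (t + 1)) :
    ((C3 f S m₁).ncard : ℚ) = Nprime (Nat.card K) (t + 1) m₁ ν ∧
    ((C4 f S m₂ t).ncard : ℚ) =
      gaussBinom (Nat.card K) (t + 1) 1 * Nprime (Nat.card K) t m₂ ν -
        Nat.card K * gaussBinom (Nat.card K) t 1 * Nprime (Nat.card K) (t + 1) m₂ ν ∧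
    ((C3 f S m₁).ncard : ℚ) * (C4 f S m₂ t).ncard =
      Nprime (Nat.card K) (t + 1) m₁ ν *
        (gaussBinom (Nat.card K) (t + 1) 1 * Nprime (Nat.card K) t m₂ ν -
          Nat.card K * gaussBinom (Nat.card K) t 1 * Nprime (Nat.card K) (t + 1) m₂ ν) := by
  have hC3 := ncard_C3 hf hf' hV hm₁ hS
  have hC4 := ncard_C4 hf hf' hV hm₂ hS
  exact ⟨hC3, hC4, by rw [hC3, hC4]⟩

end Counting

theorem stmt_11
    (q ν m₁ m₂ t : ℕ) (hq : IsPrimePow q)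
    {K : Type} [Field K] [Fintype K] (hK : Fintype.card K = q)
    (f : (Fin (2 * ν) → K) →ₗ[K] (Fin (2 * ν) → K) →ₗ[K] K)
    (halt : ∀ v, f v v = 0)
    (hnd : ∀ v, (∀ w, f v w = 0) → v = 0)
    (ht : 0 < t) (hm₁ : t + 1 ≤ m₁) (hm₂ : t + 1 ≤ m₂) (hm₁ν : m₁ ≤ ν) (hm₂ν : m₂ ≤ ν)
    (S : Submodule K (Fin (2 * ν) → K)) (hS : S ∈ polar f (t + 1)) :
    ((C3 f S m₁).ncard : ℚ) = Nprime q (t + 1) m₁ ν ∧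
    ((C4 f S m₂ t).ncard : ℚ) =
      gaussBinom q (t + 1) 1 * Nprime q t m₂ ν -
        q * gaussBinom q t 1 * Nprime q (t + 1) m₂ ν ∧
    ((C3 f S m₁).ncard : ℚ) * (C4 f S m₂ t).ncard =
      Nprime q (t + 1) m₁ ν *
        (gaussBinom q (t + 1) 1 * Nprime q t m₂ ν -
          q * gaussBinom q t 1 * Nprime q (t + 1) m₂ ν) := by
  subst hK
  simpa only [Nat.card_eq_fintype_card] using
    stmt_11_general halt hnd (finrank_fin_fun K) hm₁ hm₂ hS

end
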